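/- arXiv:2507.02636 — 2 statements merged into one kernel-verified Lean document; each statement's English description precedes it below -/
import Mathlib

section
/- Let E be a real inner product space, X ⊆ E a nonempty convex set, a, x₀ ∈ E, and ψ : E → ℝ a convex function. Suppose z ∈ X minimizes the composite objective x ↦ ⟨a, x⟩ + ψ(x) + ‖x − x₀‖² over X, i.e., ⟨a, z⟩ + ψ(z) + ‖z − x₀‖² ≤ ⟨a, x⟩ + ψ(x) + ‖x − x₀‖² for all x ∈ X. Then for every y ∈ X: ⟨a, z − y⟩ + ψ(z) − ψ(y) ≤ ‖y − x₀‖² − ‖y − z‖² − ‖z − x₀‖². -/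
open scoped RealInnerProductSpace

/-!
Compare `z` with the points `(1 - t) z + t y` of the segment from `z` to `y`. By minimality of `z`
and convexity of `ψ`, the gap
`L = ⟪a, z - y⟫ + ψ z - ψ y - 2 ⟪z - x₀, y - z⟫` satisfies `t L ≤ t² ‖y - z‖²` for `0 < t ≤ 1`, so
`L ≤ t ‖y - z‖²`, and `t → 0` gives `L ≤ 0`. The polarization identity turns this into the claim.
-/

/-- Three-point (proximal) inequality: if `z` minimizes
`x ↦ ⟪a, x⟫ + ψ x + ‖x - x₀‖²` over a nonempty convex set `X`, with `ψ` convex,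
then for every `y ∈ X`,
`⟪a, z - y⟫ + ψ z - ψ y ≤ ‖y - x₀‖² - ‖y - z‖² - ‖z - x₀‖²`. -/
theorem stmt2 {E : Type*} [NormedAddCommGroup E] [InnerProductSpace ℝ E]
    (X : Set E) (hne : X.Nonempty) (hXc : Convex ℝ X)
    (a x₀ : E) (ψ : E → ℝ) (hψ : ConvexOn ℝ Set.univ ψ)
    (z : E) (hz : z ∈ X)
    (hmin : ∀ x ∈ X, ⟪a, z⟫ + ψ z + ‖z - x₀‖ ^ 2 ≤ ⟪a, x⟫ + ψ x + ‖x - x₀‖ ^ 2) :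
    ∀ y ∈ X, ⟪a, z - y⟫ + ψ z - ψ y ≤ ‖y - x₀‖ ^ 2 - ‖y - z‖ ^ 2 - ‖z - x₀‖ ^ 2 := by
  intro y hy
  have polar : ‖y - x₀‖ ^ 2 = ‖z - x₀‖ ^ 2 + 2 * ⟪z - x₀, y - z⟫ + ‖y - z‖ ^ 2 := by
    rw [← norm_add_sq_real]
    congr 2
    abel
  have key : ∀ t : ℝ, 0 < t → t ≤ 1 →
      ⟪a, z - y⟫ + ψ z - ψ y - 2 * ⟪z - x₀, y - z⟫ ≤ t * ‖y - z‖ ^ 2 := by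
    intro t ht ht1
    have hmem := hXc hz hy (sub_nonneg.2 ht1) ht.le (sub_add_cancel 1 t)
    have hconv := hψ.2 (Set.mem_univ z) (Set.mem_univ y) (sub_nonneg.2 ht1) ht.le
      (sub_add_cancel 1 t)
    have hm := hmin _ hmem
    have hnorm : ‖(1 - t) • z + t • y - x₀‖ ^ 2
        = ‖z - x₀‖ ^ 2 + 2 * (t * ⟪z - x₀, y - z⟫) + t ^ 2 * ‖y - z‖ ^ 2 := by
      have hpt : (1 - t) • z + t • y - x₀ = (z - x₀) + t • (y - z) := by module
      rw [hpt, norm_add_sq_real, real_inner_smul_right, norm_smul, mul_pow, Real.norm_eq_abs,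
        sq_abs]
    rw [hnorm, inner_add_right, real_inner_smul_right, real_inner_smul_right] at hm
    simp only [smul_eq_mul] at hconv
    rw [inner_sub_right a z y]
    refine le_of_mul_le_mul_left ?_ ht
    linarith
  -- If the gap `L` were positive, `t = 1` gives `L ≤ ‖y - z‖²`, so that `t = L / (2 ‖y - z‖²)` is
  -- admissible and yields `L ≤ L / 2`.
  by_contra! hlt
  set L := ⟪a, z - y⟫ + ψ z - ψ y - 2 * ⟪z - x₀, y - z⟫ with hL
  have hLpos : 0 < L := by linarith
  have h1 := key 1 one_pos le_rfl
  have hN : 0 < ‖y - z‖ ^ 2 := by linarith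
  have h2 := key (L / (2 * ‖y - z‖ ^ 2)) (by positivity) (by
    rw [div_le_one (by positivity)]
    linarith)
  have h3 : L / (2 * ‖y - z‖ ^ 2) * ‖y - z‖ ^ 2 = L / 2 := by
    rw [← div_div, div_mul_cancel₀ _ hN.ne']
  linarith
end

section
/- Let E be a real inner product space, X ⊆ E a nonempty convex set, and k a positive natural number. Let f : E → ℝ be convex, x_t ∈ X, and let g ∈ E be a subgradient of f at x_t with ‖g‖ ≤ J for some J ≥ 0. Let G_1,…,G_k : E → ℝ be functions such that each clipped function x ↦ max(G_j(x), 0) is convex, let Q ∈ ℝ^k have nonnegative entries, and let α, β > 0. Suppose z ∈ X minimizes x ↦ α⟨g, x − x_t⟩ + αβ∑_{j=1}^k Q_j·max(G_j(x), 0) + ‖x − x_t‖² over X. Then for every y ∈ X: f(x_t) − f(y) ≤ J²α/2 + β∑_{j=1}^k Q_j·max(G_j(y), 0) − β∑_{j=1}^k Q_j·max(G_j(z), 0) + (1/α)(‖y − x_t‖² − ‖y − z‖²). -/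
open scoped RealInnerProductSpace

/-!
The squared distance `‖· - c‖²` satisfies the exact identity defining strong convexity, so a minimizer
`z` of `h + ‖· - c‖²` with `h` convex beats every competitor `y` by the extra margin `‖y - z‖²`
(`three_point`). With `h` the linearized objective plus the weighted clipped constraints, it remains
to use the subgradient inequality at `y` and to absorb the term `α⟪g, z - xt⟫` into `‖z - xt‖²` by
Cauchy–Schwarz and Young's inequality; this costs `α²J²/4`, which is at most `α²J²/2`.
-/

/-- Three-point inequality for a proximal step. The minimizer is compared with the points
`(1 - s) z + s y` as `s → 0⁺`. -/
lemma three_point {E : Type*} [NormedAddCommGroup E] [InnerProductSpace ℝ E]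
    {X : Set E} {h : E → ℝ} (hh : ConvexOn ℝ X h) {c z y : E} (hz : z ∈ X) (hy : y ∈ X)
    (hmin : ∀ x ∈ X, h z + ‖z - c‖ ^ 2 ≤ h x + ‖x - c‖ ^ 2) :
    h z + ‖z - c‖ ^ 2 + ‖y - z‖ ^ 2 ≤ h y + ‖y - c‖ ^ 2 := by
  have key : ∀ s : ℝ, 0 < s → s < 1 →
      h z + ‖z - c‖ ^ 2 + ‖y - z‖ ^ 2 ≤ h y + ‖y - c‖ ^ 2 + s * ‖y - z‖ ^ 2 := by
    intro s hs0 hs1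
    have h1s : 0 ≤ 1 - s := by linarith
    have hx := hmin _ (hh.1 hz hy h1s hs0.le (by ring))
    have hc := hh.2 hz hy h1s hs0.le (by ring)
    simp only [smul_eq_mul] at hc
    have e1 : (1 - s) • z + s • y - c = (z - c) + s • (y - z) := by module
    have e2 : y - c = (z - c) + (y - z) := by abel
    have n1 : ‖(1 - s) • z + s • y - c‖ ^ 2
        = ‖z - c‖ ^ 2 + 2 * (s * ⟪z - c, y - z⟫) + s ^ 2 * ‖y - z‖ ^ 2 := by
      rw [e1, norm_add_sq_real, inner_smul_right, norm_smul, mul_pow, Real.norm_eq_abs, sq_abs]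
    have n2 : ‖y - c‖ ^ 2 = ‖z - c‖ ^ 2 + 2 * ⟪z - c, y - z⟫ + ‖y - z‖ ^ 2 := by
      rw [e2, norm_add_sq_real]
    rw [n1] at hx
    rw [n2]
    refine le_of_mul_le_mul_left ?_ hs0
    linarith
  refine le_of_forall_pos_le_add fun ε hε => ?_
  have hD : 0 < ‖y - z‖ ^ 2 + 1 := by positivity
  have hk := key (min (1 / 2) (ε / (‖y - z‖ ^ 2 + 1))) (by positivity)
    ((min_le_left _ _).trans_lt (by norm_num))
  have hb : min (1 / 2) (ε / (‖y - z‖ ^ 2 + 1)) * ‖y - z‖ ^ 2 ≤ ε := by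
    calc min (1 / 2) (ε / (‖y - z‖ ^ 2 + 1)) * ‖y - z‖ ^ 2
        ≤ ε / (‖y - z‖ ^ 2 + 1) * (‖y - z‖ ^ 2 + 1) :=
          mul_le_mul (min_le_right _ _) (by linarith) (by positivity) (by positivity)
      _ = ε := div_mul_cancel₀ _ hD.ne'
  linarith

/-- Combined per-step bound (22) for the virtual-queue-based OCO update: if `z` minimizes
`x ↦ α⟪g, x - x_t⟫ + αβ∑ⱼ Qⱼ max(Gⱼ x, 0) + ‖x - x_t‖²` over the convex set `X`,
where `g` is a subgradient of `f` at `x_t` with `‖g‖ ≤ J`, the clipped constraints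
`max(Gⱼ ·, 0)` are convex and `Q` has nonnegative entries, then for every `y ∈ X`,
`f x_t - f y ≤ J²α/2 + β∑ⱼ Qⱼ max(Gⱼ y, 0) - β∑ⱼ Qⱼ max(Gⱼ z, 0)
  + (1/α)(‖y - x_t‖² - ‖y - z‖²)`. -/
theorem stmt4 {E : Type*} [NormedAddCommGroup E] [InnerProductSpace ℝ E]
    (X : Set E) (hne : X.Nonempty) (hXc : Convex ℝ X)
    (k : ℕ) (hk : 0 < k)
    (f : E → ℝ) (hf : ConvexOn ℝ Set.univ f)
    (xt : E) (hxt : xt ∈ X)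
    (J : ℝ) (hJ : 0 ≤ J)
    (g : E) (hsub : ∀ u, f xt + ⟪g, u - xt⟫ ≤ f u) (hgn : ‖g‖ ≤ J)
    (G : Fin k → E → ℝ) (hG : ∀ j, ConvexOn ℝ Set.univ (fun x => max (G j x) 0))
    (Q : Fin k → ℝ) (hQ : ∀ j, 0 ≤ Q j)
    (α β : ℝ) (hα : 0 < α) (hβ : 0 < β)
    (z : E) (hz : z ∈ X)
    (hmin : ∀ x ∈ X,
      α * ⟪g, z - xt⟫ + α * β * ∑ j, Q j * max (G j z) 0 + ‖z - xt‖ ^ 2 ≤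
        α * ⟪g, x - xt⟫ + α * β * ∑ j, Q j * max (G j x) 0 + ‖x - xt‖ ^ 2) :
    ∀ y ∈ X, f xt - f y ≤
      J ^ 2 * α / 2 + β * ∑ j, Q j * max (G j y) 0 - β * ∑ j, Q j * max (G j z) 0 +
        (1 / α) * (‖y - xt‖ ^ 2 - ‖y - z‖ ^ 2) := by
  intro y hy
  have hconv : ConvexOn ℝ X
      (fun x => α * ⟪g, x - xt⟫ + α * β * ∑ j, Q j * max (G j x) 0) := by
    refine ⟨hXc, fun a _ b _ s t hs ht hst => ?_⟩
    have hlin : ⟪g, s • a + t • b - xt⟫ = s * ⟪g, a - xt⟫ + t * ⟪g, b - xt⟫ := by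
      have e : s • a + t • b - xt = s • (a - xt) + t • (b - xt) := by
        obtain rfl : t = 1 - s := by linarith
        module
      rw [e, inner_add_right, inner_smul_right, inner_smul_right]
    have hsum : ∑ j, Q j * max (G j (s • a + t • b)) 0
        ≤ s * ∑ j, Q j * max (G j a) 0 + t * ∑ j, Q j * max (G j b) 0 := by
      rw [Finset.mul_sum, Finset.mul_sum, ← Finset.sum_add_distrib]
      refine Finset.sum_le_sum fun j _ => ?_
      have hj := (hG j).2 (Set.mem_univ a) (Set.mem_univ b) hs ht hst
      simp only [smul_eq_mul] at hj
      have := mul_le_mul_of_nonneg_left hj (hQ j)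
      linarith
    have := mul_le_mul_of_nonneg_left hsum (mul_pos hα hβ).le
    simp only [smul_eq_mul]
    rw [hlin]
    linarith
  have h3 := three_point hconv hz hy hmin
  have hs := mul_le_mul_of_nonneg_left (hsub y) hα.le
  have hcs : -(J * ‖z - xt‖) ≤ ⟪g, z - xt⟫ := by
    have h1 := (abs_le.mp (abs_real_inner_le_norm g (z - xt))).1
    have h2 := mul_le_mul_of_nonneg_right hgn (norm_nonneg (z - xt))
    linarith
  have hcs' := mul_le_mul_of_nonneg_left hcs hα.le
  refine le_of_mul_le_mul_left ?_ hα
  have e : α * (J ^ 2 * α / 2 + β * ∑ j, Q j * max (G j y) 0 - β * ∑ j, Q j * max (G j z) 0 +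
        (1 / α) * (‖y - xt‖ ^ 2 - ‖y - z‖ ^ 2))
      = (α * J) ^ 2 / 2 + α * β * ∑ j, Q j * max (G j y) 0
        - α * β * ∑ j, Q j * max (G j z) 0 + (‖y - xt‖ ^ 2 - ‖y - z‖ ^ 2) := by
    field_simp
  rw [e]
  -- Young's inequality: `αJ‖z - xt‖ ≤ (αJ)²/4 + ‖z - xt‖²`.
  have hyoung := sq_nonneg (α * J / 2 - ‖z - xt‖)
  have := sq_nonneg (α * J)
  linarith
end
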